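/- Let w₀ : ℝ → ℝ be continuously differentiable with 0 < w₀'(x) ≤ K for all x (for a constant K > 0) and with finite limits at ±∞. For t ≥ 0 let Y(t,·) be the inverse of X_t(x₀) := x₀ + t·w₀(x₀) and let w(t,x) := w₀(Y(t,x)). Then for all t ≥ 0 and x ∈ ℝ, 0 < ∂ₓw(t,x) ≤ K/(1 + K·t); in particular sup_{x∈ℝ} ∂ₓw(t,x) ≤ max(K,1) · (1+t)^{-1}. -/

import Mathlib

open Filter

/-!
The characteristic map `X_t = id + t • w₀` is the identity plus a monotone map, so it does not
decrease distances; its inverse `Y t` is therefore continuous, hence differentiable by the inverse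
function rule, and `∂ₓw = d / (1 + t * d)` with `d = w₀' (Y t x)`. Since `d ↦ d / (1 + t * d)` is
increasing, `d ≤ K` gives the decay.
-/

/-- The characteristic map `X_t` of the Burgers equation with initial data `w₀`: the position at
time `t` of the characteristic issued from `x₀`. -/
def burgersCharacteristic (w₀ : ℝ → ℝ) (t x₀ : ℝ) : ℝ :=
  x₀ + t * w₀ x₀

theorem antilipschitzWith_one_id_add_of_monotone {g : ℝ → ℝ} (hg : Monotone g) :
    AntilipschitzWith 1 fun x => x + g x := by
  refine AntilipschitzWith.of_le_mul_dist fun a b => ?_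
  rw [NNReal.coe_one, one_mul]
  wlog hba : b ≤ a generalizing a b
  · simpa only [dist_comm] using this b a (le_of_not_ge hba)
  have hgba : g b ≤ g a := hg hba
  rw [Real.dist_eq, Real.dist_eq, abs_of_nonneg (by linarith), abs_of_nonneg (by linarith)]
  linarith

theorem antilipschitzWith_burgersCharacteristic {w₀ : ℝ → ℝ} {t : ℝ} (hw₀ : Monotone w₀)
    (ht : 0 ≤ t) : AntilipschitzWith 1 (burgersCharacteristic w₀ t) :=
  antilipschitzWith_one_id_add_of_monotone (hw₀.const_mul ht)

theorem hasDerivAt_burgersCharacteristic {w₀ : ℝ → ℝ} {d x₀ : ℝ} (t : ℝ)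
    (hw₀ : HasDerivAt w₀ d x₀) : HasDerivAt (burgersCharacteristic w₀ t) (1 + t * d) x₀ :=
  (hasDerivAt_id' x₀).add (hw₀.const_mul t)

section RightInverse

variable {w₀ y : ℝ → ℝ} {t d x : ℝ}

theorem hasDerivAt_rightInverse_burgersCharacteristic (hmono : Monotone w₀) (ht : 0 ≤ t)
    (hy : Function.RightInverse y (burgersCharacteristic w₀ t)) (hd : HasDerivAt w₀ d (y x)) :
    HasDerivAt y (1 + t * d)⁻¹ x := by
  have hy_lip : LipschitzWith 1 y :=
    (antilipschitzWith_burgersCharacteristic hmono ht).to_rightInverse hy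
  have hd_nonneg : 0 ≤ d := hd.deriv ▸ hmono.deriv_nonneg
  exact (hasDerivAt_burgersCharacteristic t hd).of_local_left_inverse
    hy_lip.continuous.continuousAt (by positivity) (.of_forall hy)

theorem hasDerivAt_comp_rightInverse_burgersCharacteristic (hmono : Monotone w₀) (ht : 0 ≤ t)
    (hy : Function.RightInverse y (burgersCharacteristic w₀ t)) (hd : HasDerivAt w₀ d (y x)) :
    HasDerivAt (w₀ ∘ y) (d / (1 + t * d)) x :=
  hd.comp x (hasDerivAt_rightInverse_burgersCharacteristic hmono ht hy hd)

end RightInverse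

section OrderedField

variable {α : Type*} [Field α] [LinearOrder α] [IsStrictOrderedRing α] {a b t : α}

theorem div_one_add_mul_le_div_one_add_mul (ht : 0 ≤ t) (ha : 0 ≤ a) (hab : a ≤ b) :
    a / (1 + a * t) ≤ b / (1 + b * t) := by
  have hb : 0 ≤ b := ha.trans hab
  rw [div_le_div_iff₀ (by positivity) (by positivity)]
  linarith

theorem div_one_add_mul_le_max_one_mul_inv (ht : 0 ≤ t) (ha : 0 ≤ a) :
    a / (1 + a * t) ≤ max a 1 * (1 + t)⁻¹ :=
  calc a / (1 + a * t) ≤ max a 1 / (1 + max a 1 * t) :=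
        div_one_add_mul_le_div_one_add_mul ht ha (le_max_left a 1)
    _ ≤ max a 1 / (1 + t) := by
        gcongr
        exact le_mul_of_one_le_left ht (le_max_right a 1)
    _ = max a 1 * (1 + t)⁻¹ := div_eq_mul_inv _ _

end OrderedField

theorem burgers_derivative_decay_Linfty_general {K t x : ℝ} {w₀ y : ℝ → ℝ} (ht : 0 ≤ t)
    (hmono : Monotone w₀) (hy : Function.RightInverse y (burgersCharacteristic w₀ t))
    (hpos : 0 < deriv w₀ (y x)) (hbd : deriv w₀ (y x) ≤ K) :
    (0 < deriv (w₀ ∘ y) x ∧ deriv (w₀ ∘ y) x ≤ K / (1 + K * t)) ∧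
      deriv (w₀ ∘ y) x ≤ max K 1 * (1 + t)⁻¹ := by
  have hd : HasDerivAt w₀ (deriv w₀ (y x)) (y x) :=
    (differentiableAt_of_deriv_ne_zero hpos.ne').hasDerivAt
  have hderiv : deriv (w₀ ∘ y) x = deriv w₀ (y x) / (1 + deriv w₀ (y x) * t) := by
    rw [mul_comm _ t]
    exact (hasDerivAt_comp_rightInverse_burgersCharacteristic hmono ht hy hd).deriv
  have hle : deriv (w₀ ∘ y) x ≤ K / (1 + K * t) :=
    hderiv.trans_le (div_one_add_mul_le_div_one_add_mul ht hpos.le hbd)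
  have hK : 0 ≤ K := hpos.le.trans hbd
  exact ⟨⟨by rw [hderiv]; positivity, hle⟩, hle.trans (div_one_add_mul_le_max_one_mul_inv ht hK)⟩

/-- L^∞ decay of the derivative (Lemma 2.1(2), case `r = ∞`): if `0 < w₀' ≤ K` and `w₀`
has finite limits at `±∞`, then the Burgers solution `w(t,x) = w₀(Y(t,x))` satisfies
`0 < ∂ₓw(t,x) ≤ K/(1+Kt)`, hence `∂ₓw(t,x) ≤ max(K,1)·(1+t)⁻¹`, for all `t ≥ 0`, `x`. -/
theorem burgers_derivative_decay_Linfty (K : ℝ) (hK : 0 < K)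
    (w₀ : ℝ → ℝ) (hw : ContDiff ℝ 1 w₀)
    (hpos : ∀ x, 0 < deriv w₀ x) (hbd : ∀ x, deriv w₀ x ≤ K)
    (wm wp : ℝ)
    (hminus : Tendsto w₀ atBot (nhds wm)) (hplus : Tendsto w₀ atTop (nhds wp))
    (Y : ℝ → ℝ → ℝ) (hY : ∀ t : ℝ, 0 ≤ t → ∀ x, Y t x + t * w₀ (Y t x) = x)
    (w : ℝ → ℝ → ℝ) (hwdef : ∀ t x, w t x = w₀ (Y t x)) :
    ∀ t : ℝ, 0 ≤ t → ∀ x : ℝ,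
      (0 < deriv (fun y => w t y) x ∧ deriv (fun y => w t y) x ≤ K / (1 + K * t)) ∧
      deriv (fun y => w t y) x ≤ max K 1 * (1 + t)⁻¹ := by
  obtain rfl : w = fun t => w₀ ∘ Y t := funext₂ hwdef
  exact fun t ht x => burgers_derivative_decay_Linfty_general ht
    (strictMono_of_deriv_pos hpos).monotone (hY t ht) (hpos _) (hbd _)
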